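/- Let X and Y be metric spaces satisfying assumptions (A), let D ⊊ X be a bounded domain that is finitely connected at the boundary, let Ω ⊊ Y be a bounded domain that is locally connected at the boundary, and let f ∈ F(D, Ω). Then the map Φ : ∂_P^S D → ∂Ω defined by Φ([E_k]) := x, where {x} = I[f⁻¹(E_k)] is the (singleton) impression of the end represented by the chain {f⁻¹(E_k)}, is well defined (independent of the representative chain) and bijective. -/

import Mathlib

open Set Metric Filter Bornology
open scoped ENNReal Topology

noncomputable section

/-- A metric space is doubling if there is `N` such that every ball of radius `r`
can be covered by at most `N` balls of radius `r/2`. -/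
def DoublingSpace (X : Type*) [MetricSpace X] : Prop :=
  ∃ N : ℕ, ∀ (x : X) (r : ℝ), ∃ t : Finset X,
    t.card ≤ N ∧ Metric.ball x r ⊆ ⋃ y ∈ t, Metric.ball y (r / 2)

/-- A metric space is quasiconvex if there is `C ≥ 1` such that any two points are
joined by a rectifiable curve of length at most `C · d(x,y)`. -/
def QuasiconvexSpace (X : Type*) [MetricSpace X] : Prop :=
  ∃ C : ℝ, 1 ≤ C ∧ ∀ x y : X, ∃ γ : ℝ → X,
    ContinuousOn γ (Set.Icc 0 1) ∧ γ 0 = x ∧ γ 1 = y ∧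
    eVariationOn γ (Set.Icc 0 1) ≤ ENNReal.ofReal (C * dist x y)

/-- Assumptions (A): complete, doubling and quasiconvex. -/
def AssumptionsA (X : Type*) [MetricSpace X] : Prop :=
  CompleteSpace X ∧ DoublingSpace X ∧ QuasiconvexSpace X

/-- A domain: a nonempty open connected subset. -/
def IsDomainIn {X : Type*} [MetricSpace X] (Ω : Set X) : Prop :=
  IsOpen Ω ∧ IsConnected Ω

/-- The inner diameter distance `dist_{M'}` between `E, F ⊆ Ω`: the infimum of diameters of
rectifiable curves in `Ω` joining `E` and `F` (the infimum of the empty set being `∞`). -/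
def innerDiamDist {X : Type*} [MetricSpace X] (Ω E F : Set X) : ℝ≥0∞ :=
  ⨅ (γ : ℝ → X) (_ : ContinuousOn γ (Set.Icc 0 1) ∧ γ '' Set.Icc 0 1 ⊆ Ω ∧
      eVariationOn γ (Set.Icc 0 1) < ⊤ ∧ γ 0 ∈ E ∧ γ 1 ∈ F),
    EMetric.diam (γ '' Set.Icc 0 1)

/-- The Mazurkiewicz distance `dist_M` between `A, B ⊆ Ω`: the infimum of diameters of
connected subsets of `Ω` meeting both `A` and `B`. -/
def mazDist {X : Type*} [MetricSpace X] (Ω A B : Set X) : ℝ≥0∞ :=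
  ⨅ (K : Set X) (_ : K ⊆ Ω ∧ IsConnected K ∧ (K ∩ A).Nonempty ∧ (K ∩ B).Nonempty),
    EMetric.diam K

/-- An acceptable set in a bounded domain `Ω`: a bounded connected proper subset of `Ω`
whose closure meets `∂Ω`. -/
def AcceptableIn {X : Type*} [MetricSpace X] (Ω E : Set X) : Prop :=
  Bornology.IsBounded E ∧ IsConnected E ∧ E ⊆ Ω ∧ E ≠ Ω ∧
    (closure E ∩ frontier Ω).Nonempty

/-- A chain in `Ω`. -/
def IsChainIn {X : Type*} [MetricSpace X] (Ω : Set X) (E : ℕ → Set X) : Prop :=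
  (∀ k, AcceptableIn Ω (E k)) ∧
  (∀ k, E (k + 1) ⊆ E k) ∧
  (∀ k, 0 < mazDist Ω (Ω ∩ frontier (E (k + 1))) (Ω ∩ frontier (E k))) ∧
  (⋂ k, closure (E k)) ⊆ frontier Ω

/-- The impression of a chain. -/
def impression {X : Type*} [MetricSpace X] (E : ℕ → Set X) : Set X :=
  ⋂ k, closure (E k)

/-- A chain `E` divides a chain `F` if every member of `F` contains some member of `E`. -/
def ChainDivides {X : Type*} (E F : ℕ → Set X) : Prop :=
  ∀ k, ∃ l, E l ⊆ F k

/-- Two chains are equivalent if they divide each other. -/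
def ChainEquiv {X : Type*} (E F : ℕ → Set X) : Prop :=
  ChainDivides E F ∧ ChainDivides F E

/-- A chain represents a prime end if every chain dividing it is equivalent to it. -/
def IsPrimeChain {X : Type*} [MetricSpace X] (Ω : Set X) (E : ℕ → Set X) : Prop :=
  IsChainIn Ω E ∧ ∀ F : ℕ → Set X, IsChainIn Ω F → ChainDivides F E → ChainDivides E F

/-- A chain represents a singleton prime end if moreover its impression is a single point. -/
def IsSingletonPrimeChain {X : Type*} [MetricSpace X] (Ω : Set X) (E : ℕ → Set X) : Prop :=
  IsPrimeChain Ω E ∧ ∃ x : X, impression E = {x}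

/-- The bounded turning condition (linear connectedness): any two distinct points of `Ω` lie in a
continuum contained in `Ω` of diameter at most `L` times their distance. -/
def BoundedTurning {X : Type*} [MetricSpace X] (Ω : Set X) : Prop :=
  ∃ L : ℝ, 1 ≤ L ∧ ∀ x ∈ Ω, ∀ y ∈ Ω, x ≠ y → ∃ K : Set X,
    K ⊆ Ω ∧ IsCompact K ∧ IsConnected K ∧ K.Nontrivial ∧ x ∈ K ∧ y ∈ K ∧
    Metric.diam K ≤ L * dist x y

/-- `Ω` is finitely connected at a boundary point `x`. -/
def FinitelyConnectedAt {X : Type*} [MetricSpace X] (Ω : Set X) (x : X) : Prop :=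
  ∀ r : ℝ, 0 < r → ∃ U : Set X, IsOpen U ∧ Bornology.IsBounded U ∧ x ∈ U ∧
    U ⊆ Metric.ball x r ∧
    {C : Set X | ∃ y ∈ U ∩ Ω, C = connectedComponentIn (U ∩ Ω) y}.Finite

/-- `Ω` is finitely connected at the boundary. -/
def FinitelyConnectedAtBoundary {X : Type*} [MetricSpace X] (Ω : Set X) : Prop :=
  ∀ x ∈ frontier Ω, FinitelyConnectedAt Ω x

/-- `Ω` is locally connected at a boundary point `x`. -/
def LocallyConnectedAt {X : Type*} [MetricSpace X] (Ω : Set X) (x : X) : Prop :=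
  ∀ r : ℝ, 0 < r → ∃ U : Set X, IsOpen U ∧ Bornology.IsBounded U ∧ x ∈ U ∧
    U ⊆ Metric.ball x r ∧ IsConnected (U ∩ Ω)

/-- `Ω` is locally connected at the boundary. -/
def LocallyConnectedAtBoundary {X : Type*} [MetricSpace X] (Ω : Set X) : Prop :=
  ∀ x ∈ frontier Ω, LocallyConnectedAt Ω x

/-- `f` is a homeomorphism of `Ω` onto `Ω'` with inverse `g`. -/
def IsHomeoBetween {X Y : Type*} [MetricSpace X] [MetricSpace Y] (f : X → Y) (g : Y → X)
    (Ω : Set X) (Ω' : Set Y) : Prop :=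
  ContinuousOn f Ω ∧ ContinuousOn g Ω' ∧ Set.MapsTo f Ω Ω' ∧ Set.MapsTo g Ω' Ω ∧
  (∀ x ∈ Ω, g (f x) = x) ∧ (∀ y ∈ Ω', f (g y) = y)

/-- The class `F(Ω, Ω')`: homeomorphisms such that for all connected `E, F ⊊ Ω`,
`dist_{M'}(E,F) = 0` iff `dist_{M'}(f(E), f(F)) = 0`. -/
def ClassF {X Y : Type*} [MetricSpace X] [MetricSpace Y] (Ω : Set X) (Ω' : Set Y)
    (f : X → Y) (g : Y → X) : Prop :=
  IsHomeoBetween f g Ω Ω' ∧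
  ∀ E F : Set X, E ⊆ Ω → E ≠ Ω → IsConnected E → F ⊆ Ω → F ≠ Ω → IsConnected F →
    (innerDiamDist Ω E F = 0 ↔ innerDiamDist Ω' (f '' E) (f '' F) = 0)

/-- The cluster set `C(f, x)` of `f : Ω → Y` at `x`. -/
def clusterSetOn {X Y : Type*} [MetricSpace X] [MetricSpace Y] (f : X → Y) (Ω : Set X)
    (x : X) : Set Y :=
  ⋂ U ∈ 𝓝 x, closure (f '' (U ∩ Ω))

/-!
For open sets in a locally rectifiably connected space, `dist_{M'}` equals `dist_M`, so `f` and its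
inverse preserve the relation `dist_M = 0` between connected proper subsets. A chain whose
impression is a point `x` shrinks to `x`; conversely every chain of sets with diameters tending to
zero is prime, since a member of a chain `F` absorbs every small connected set meeting the next one.

If the impression of `f(E_k)` contained two points, connected neighbourhoods of them in `Ω` would be
at positive distance although their preimages both meet every `E_k`. If the images of two such
chains share a boundary point, then `dist_M(f(E_l), f(F_m)) = 0` for all `l` and `m` by local
connectedness, hence `dist_M(E_l, F_m) = 0`, and absorption makes the chains divide each other. For
surjectivity, pull back an ultrafilter on `Ω` converging to `y`; it converges to some `x ∈ ∂D`, and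
finite connectedness singles out at each scale the component near `x` that belongs to it.
-/

section Topology

variable {X : Type*} [TopologicalSpace X]

lemma inter_frontier_nonempty_of_isPreconnected {K S : Set X} (hK : IsPreconnected K)
    (hKS : (K ∩ S).Nonempty) (hKS' : ¬K ⊆ S) : (K ∩ frontier S).Nonempty := by
  by_contra hne
  have hcover : K ⊆ interior S ∪ (closure S)ᶜ := by
    intro z hz
    by_contra h
    rw [mem_union, not_or, notMem_compl_iff] at h
    exact hne ⟨z, hz, h.2, h.1⟩
  obtain ⟨a, haK, haS⟩ := hKS
  obtain ⟨b, hbK, hbS⟩ := not_subset.1 hKS'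
  obtain ⟨z, -, hzi, hzc⟩ := hK _ _ isOpen_interior isClosed_closure.isOpen_compl hcover
    ⟨a, haK, (hcover haK).resolve_right (· (subset_closure haS))⟩
    ⟨b, hbK, (hcover hbK).resolve_left (hbS <| interior_subset ·)⟩
  exact hzc (interior_subset_closure hzi)

lemma disjoint_frontier_connectedComponentIn [LocallyConnectedSpace X] {U : Set X}
    (hU : IsOpen U) (x : X) : Disjoint (frontier (connectedComponentIn U x)) U := by
  rw [Set.disjoint_left]
  intro z hz hzU
  obtain ⟨w, hwz, hwx⟩ :=
    mem_closure_iff.1 hz.1 _ hU.connectedComponentIn (mem_connectedComponentIn hzU)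
  have heq : connectedComponentIn U z = connectedComponentIn U x :=
    (connectedComponentIn_eq hwz).trans (connectedComponentIn_eq hwx).symm
  apply hz.2
  rw [hU.connectedComponentIn.interior_eq, ← heq]
  exact mem_connectedComponentIn hzU

lemma inter_nonempty_of_mem_nhdsWithin {A S Ω : Set X} {y : X} (hA : A ∈ 𝓝[Ω] y) (hS : S ⊆ Ω)
    (hy : y ∈ closure S) : (A ∩ S).Nonempty :=
  have := mem_closure_iff_nhdsWithin_neBot.1 hy
  nonempty_of_mem (inter_mem (nhdsWithin_mono y hS hA) self_mem_nhdsWithin)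

end Topology

lemma tendsto_ediam_smallSets_nhds {X : Type*} [PseudoEMetricSpace X] (x : X) :
    Tendsto ediam (𝓝 x).smallSets (𝓝 0) := by
  refine ENNReal.tendsto_nhds_zero.2 fun ε hε => ?_
  have hball : eball x (ε / 2) ∈ 𝓝 x := eball_mem_nhds x (ENNReal.half_pos hε.ne')
  filter_upwards [eventually_smallSets_subset.2 hball] with S hS
  calc ediam S ≤ ediam (eball x (ε / 2)) := ediam_mono hS
    _ ≤ 2 * (ε / 2) := ediam_eball_le
    _ = ε := ENNReal.mul_div_cancel two_ne_zero ENNReal.ofNat_ne_top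

section Doubling

variable {X : Type*} [MetricSpace X]

lemma DoublingSpace.exists_finite_cover_ball (h : DoublingSpace X) (x : X) (r : ℝ) (n : ℕ) :
    ∃ t : Set X, t.Finite ∧ ball x r ⊆ ⋃ y ∈ t, ball y (r / 2 ^ n) := by
  obtain ⟨N, hN⟩ := h
  induction n with
  | zero => exact ⟨{x}, finite_singleton x, by simp⟩
  | succ n ih =>
    obtain ⟨t, ht, hcover⟩ := ih
    choose T _ hT using fun y => hN y (r / 2 ^ n)
    refine ⟨⋃ y ∈ t, (T y : Set X), ht.biUnion fun y _ => (T y).finite_toSet, fun z hz => ?_⟩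
    obtain ⟨y, hy, hzy⟩ := mem_iUnion₂.1 (hcover hz)
    obtain ⟨w, hw, hzw⟩ := mem_iUnion₂.1 (hT y hzy)
    rw [pow_succ, ← div_div]
    exact mem_iUnion₂.2 ⟨w, mem_iUnion₂.2 ⟨y, hy, hw⟩, hzw⟩

lemma DoublingSpace.totallyBounded_ball (h : DoublingSpace X) (x : X) (r : ℝ) :
    TotallyBounded (ball x r) := by
  refine totallyBounded_iff.2 fun ε hε => ?_
  have hlim : Tendsto (fun n : ℕ => r / 2 ^ n) atTop (𝓝 0) :=
    tendsto_const_nhds.div_atTop (tendsto_pow_atTop_atTop_of_one_lt one_lt_two)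
  obtain ⟨n, hn⟩ := (hlim.eventually_lt_const hε).exists
  obtain ⟨t, ht, hcover⟩ := h.exists_finite_cover_ball x r n
  exact ⟨t, ht, hcover.trans (iUnion₂_mono fun y _ => ball_subset_ball hn.le)⟩

lemma DoublingSpace.properSpace [CompleteSpace X] (h : DoublingSpace X) : ProperSpace X where
  isCompact_closedBall x r :=
    ((h.totallyBounded_ball x (r + 1)).subset
      (closedBall_subset_ball (lt_add_one r))).isCompact_of_isClosed isClosed_closedBall

lemma AssumptionsA.isCompact_closure (hX : AssumptionsA X) {S : Set X} (hS : IsBounded S) :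
    IsCompact (closure S) :=
  have := hX.1
  have := hX.2.1.properSpace
  hS.isCompact_closure

end Doubling

section Rectifiable

variable {X : Type*} [MetricSpace X] {V : Set X} {a b c : X}

/-- The points `a` and `b` are the endpoints of a rectifiable curve in `V`; the curve is encoded as
in `innerDiamDist`. -/
def RectifiablyJoinedIn (V : Set X) (a b : X) : Prop :=
  ∃ γ : ℝ → X, ContinuousOn γ (Icc 0 1) ∧ γ '' Icc 0 1 ⊆ V ∧
    eVariationOn γ (Icc 0 1) < ⊤ ∧ γ 0 = a ∧ γ 1 = b

lemma RectifiablyJoinedIn.symm (h : RectifiablyJoinedIn V a b) : RectifiablyJoinedIn V b a := by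
  obtain ⟨γ, hcont, himage, hvar, rfl, rfl⟩ := h
  have hmaps : MapsTo (fun t : ℝ => 1 - t) (Icc 0 1) (Icc 0 1) :=
    fun t ht => ⟨sub_nonneg.2 ht.2, sub_le_self 1 ht.1⟩
  refine ⟨γ ∘ fun t => 1 - t, hcont.comp (by fun_prop) hmaps, ?_, ?_, by simp, by simp⟩
  · rw [image_comp]
    exact (image_mono hmaps.image_subset).trans himage
  · exact (eVariationOn.comp_le_of_antitoneOn γ _
      (fun s _ t _ hst => sub_le_sub_left hst 1) hmaps).trans_lt hvar

lemma RectifiablyJoinedIn.trans (hab : RectifiablyJoinedIn V a b)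
    (hbc : RectifiablyJoinedIn V b c) : RectifiablyJoinedIn V a c := by
  obtain ⟨γ, hγ, hγV, hγvar, rfl, hγ1⟩ := hab
  obtain ⟨δ, hδ, hδV, hδvar, hδ0, rfl⟩ := hbc
  have hleft : MapsTo (fun t : ℝ => 2 * t) (Icc 0 (1 / 2)) (Icc 0 1) :=
    fun t ht => ⟨by linarith [ht.1], by linarith [ht.2]⟩
  have hright : MapsTo (fun t : ℝ => 2 * t - 1) (Icc (1 / 2) 1) (Icc 0 1) :=
    fun t ht => ⟨by linarith [ht.1], by linarith [ht.2]⟩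
  have hunion : Icc (0 : ℝ) 1 = Icc 0 (1 / 2) ∪ Icc (1 / 2) 1 :=
    (Icc_union_Icc_eq_Icc (by norm_num) (by norm_num)).symm
  let η : ℝ → X := fun t => if t ≤ 1 / 2 then γ (2 * t) else δ (2 * t - 1)
  have hηγ : EqOn η (γ ∘ fun t => 2 * t) (Icc 0 (1 / 2)) := fun t ht => if_pos ht.2
  have hηδ : EqOn η (δ ∘ fun t => 2 * t - 1) (Icc (1 / 2) 1) := by
    intro t ht
    rcases ht.1.eq_or_lt with rfl | hlt
    · simp [η, hγ1, hδ0]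
    · exact if_neg hlt.not_ge
  refine ⟨η, ?_, ?_, ?_, ?_, ?_⟩
  · rw [hunion]
    exact ((hγ.comp (by fun_prop) hleft).congr hηγ).union_of_isClosed
      ((hδ.comp (by fun_prop) hright).congr hηδ) isClosed_Icc isClosed_Icc
  · rw [hunion, image_union, hηγ.image_eq, hηδ.image_eq, image_comp, image_comp]
    exact union_subset ((image_mono hleft.image_subset).trans hγV)
      ((image_mono hright.image_subset).trans hδV)
  · rw [hunion, eVariationOn.union η (isGreatest_Icc (by norm_num)) (isLeast_Icc (by norm_num)),
      eVariationOn.congr hηγ, eVariationOn.congr hηδ]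
    exact ENNReal.add_lt_top.2
      ⟨(eVariationOn.comp_le_of_monotoneOn γ _
          (fun s _ t _ hst => show 2 * s ≤ 2 * t by linarith) hleft).trans_lt hγvar,
        (eVariationOn.comp_le_of_monotoneOn δ _
          (fun s _ t _ hst => show 2 * s - 1 ≤ 2 * t - 1 by linarith) hright).trans_lt hδvar⟩
  · simp [η]
  · norm_num [η]

/-- All points close enough to a given point are joined to it by rectifiable curves inside a
prescribed neighbourhood. This local form of quasiconvexity is all that the comparison of
`dist_{M'}` with `dist_M` needs. -/
def LocallyRectifiablyConnected (X : Type*) [MetricSpace X] : Prop :=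
  ∀ a : X, ∀ V ∈ 𝓝 a, ∀ᶠ b in 𝓝 a, RectifiablyJoinedIn V a b

lemma QuasiconvexSpace.locallyRectifiablyConnected (hX : QuasiconvexSpace X) :
    LocallyRectifiablyConnected X := by
  intro a V hV
  obtain ⟨C, -, hcurve⟩ := hX
  obtain ⟨δ, hδ, hδV⟩ := EMetric.mem_nhds_iff.1 hV
  have hlim : Tendsto (fun b => ENNReal.ofReal (C * dist a b)) (𝓝 a) (𝓝 0) := by
    have hcont : Continuous fun b => ENNReal.ofReal (C * dist a b) :=
      ENNReal.continuous_ofReal.comp (by fun_prop)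
    simpa only [dist_self, mul_zero, ENNReal.ofReal_zero] using hcont.tendsto a
  filter_upwards [hlim.eventually_lt_const hδ] with b hb
  obtain ⟨γ, hcont, h0, h1, hvar⟩ := hcurve a b
  refine ⟨γ, hcont, ?_, hvar.trans_lt ENNReal.ofReal_lt_top, h0, h1⟩
  rintro _ ⟨t, ht, rfl⟩
  apply hδV
  calc edist (γ t) a = edist (γ t) (γ 0) := by rw [h0]
    _ ≤ eVariationOn γ (Icc 0 1) := eVariationOn.edist_le γ ht (left_mem_Icc.2 zero_le_one)
    _ ≤ ENNReal.ofReal (C * dist a b) := hvar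
    _ < δ := hb

namespace LocallyRectifiablyConnected

lemma rectifiablyJoinedIn (hX : LocallyRectifiablyConnected X) (hV : IsOpen V) {K : Set X}
    (hK : IsPreconnected K) (hKV : K ⊆ V) (ha : a ∈ K) (hb : b ∈ K) : RectifiablyJoinedIn V a b :=
  hK.induction₂ (RectifiablyJoinedIn V)
    (fun x hx => (hX x V (hV.mem_nhds (hKV hx))).filter_mono nhdsWithin_le_nhds)
    (fun _ _ _ _ _ _ => .trans) (fun _ _ _ _ => .symm) ha hb

lemma locallyConnectedSpace (hX : LocallyRectifiablyConnected X) : LocallyConnectedSpace X := by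
  refine locallyConnectedSpace_iff_connectedComponentIn_open.2 fun F hF x _ => ?_
  refine isOpen_iff_mem_nhds.2 fun z hz => ?_
  have hzF : z ∈ F := connectedComponentIn_subset F x hz
  filter_upwards [hX z F (hF.mem_nhds hzF)] with b ⟨γ, hcont, himage, _, h0, h1⟩
  have hconn : IsPreconnected (γ '' Icc 0 1) := isPreconnected_Icc.image γ hcont
  rw [connectedComponentIn_eq hz]
  exact hconn.subset_connectedComponentIn ⟨0, left_mem_Icc.2 zero_le_one, h0⟩ himage
    ⟨1, right_mem_Icc.2 zero_le_one, h1⟩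

end LocallyRectifiablyConnected

end Rectifiable

section MazurkiewiczDistance

variable {X : Type*} [MetricSpace X] {Ω A B K : Set X}

lemma mazDist_le_ediam (hKΩ : K ⊆ Ω) (hK : IsConnected K) (hA : (K ∩ A).Nonempty)
    (hB : (K ∩ B).Nonempty) : mazDist Ω A B ≤ ediam K :=
  iInf₂_le K ⟨hKΩ, hK, hA, hB⟩

lemma mazDist_lt_iff {c : ℝ≥0∞} : mazDist Ω A B < c ↔
    ∃ K ⊆ Ω, IsConnected K ∧ (K ∩ A).Nonempty ∧ (K ∩ B).Nonempty ∧ ediam K < c := by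
  simp only [mazDist, iInf_lt_iff, exists_prop, and_assoc]; rfl

lemma ofReal_le_mazDist {c : ℝ} (h : ∀ a ∈ A, ∀ b ∈ B, c ≤ dist a b) :
    ENNReal.ofReal c ≤ mazDist Ω A B := by
  refine le_iInf₂ fun K hK => ?_
  obtain ⟨-, -, ⟨a, haK, haA⟩, ⟨b, hbK, hbB⟩⟩ := hK
  calc ENNReal.ofReal c ≤ ENNReal.ofReal (dist a b) := ENNReal.ofReal_le_ofReal (h a haA b hbB)
    _ = edist a b := (edist_dist a b).symm
    _ ≤ ediam K := edist_le_ediam_of_mem haK hbK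

lemma mazDist_eq_zero_of_tendsto {ι : Type*} {l : Filter ι} [l.NeBot] {K : ι → Set X}
    (hKΩ : ∀ i, K i ⊆ Ω) (hK : ∀ i, IsConnected (K i)) (hA : ∀ i, (K i ∩ A).Nonempty)
    (hB : ∀ i, (K i ∩ B).Nonempty) (hlim : Tendsto (fun i => ediam (K i)) l (𝓝 0)) :
    mazDist Ω A B = 0 :=
  le_antisymm
    (ge_of_tendsto' hlim fun i => mazDist_le_ediam (hKΩ i) (hK i) (hA i) (hB i)) bot_le

lemma mazDist_le_innerDiamDist (Ω A B : Set X) : mazDist Ω A B ≤ innerDiamDist Ω A B := by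
  refine le_iInf₂ fun γ hγ => ?_
  obtain ⟨hcont, himage, -, h0, h1⟩ := hγ
  exact mazDist_le_ediam himage ((isConnected_Icc zero_le_one).image γ hcont)
    ⟨γ 0, mem_image_of_mem γ (left_mem_Icc.2 zero_le_one), h0⟩
    ⟨γ 1, mem_image_of_mem γ (right_mem_Icc.2 zero_le_one), h1⟩

lemma innerDiamDist_eq_mazDist (hX : LocallyRectifiablyConnected X) (hΩ : IsOpen Ω)
    (A B : Set X) : innerDiamDist Ω A B = mazDist Ω A B := by
  refine le_antisymm (le_iInf₂ fun K hK => ?_) (mazDist_le_innerDiamDist Ω A B)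
  obtain ⟨hKΩ, hKc, ⟨a, haK, haA⟩, ⟨b, hbK, hbB⟩⟩ := hK
  refine ENNReal.le_of_forall_pos_le_add fun ε hε _ => ?_
  -- A curve joining two points of `K` inside a thin open neighbourhood of `K` is barely larger.
  obtain ⟨γ, hcont, himage, hvar, rfl, rfl⟩ :=
    hX.rectifiablyJoinedIn (hΩ.inter (isOpen_thickening (δ := (ε / 2 : NNReal)) (E := K)))
      hKc.isPreconnected (subset_inter hKΩ (self_subset_thickening (by positivity) K)) haK hbK
  calc innerDiamDist Ω A B
      ≤ ediam (γ '' Icc 0 1) :=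
        iInf₂_le γ ⟨hcont, himage.trans inter_subset_left, hvar, haA, hbB⟩
    _ ≤ ediam (thickening (ε / 2 : NNReal) K) := ediam_mono (himage.trans inter_subset_right)
    _ ≤ ediam K + 2 * (ε / 2 : NNReal) := ediam_thickening_le _
    _ = ediam K + ε := by rw [← ENNReal.coe_ofNat, ← ENNReal.coe_mul, mul_div_cancel₀ ε two_ne_zero]

end MazurkiewiczDistance

section Impression

lemma ChainDivides.image {X Y : Type*} {E F : ℕ → Set X} (h : ChainDivides E F) (f : X → Y) :
    ChainDivides (fun k => f '' E k) (fun k => f '' F k) :=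
  fun k => (h k).imp fun _ => image_mono

variable {X : Type*} [MetricSpace X] {E F : ℕ → Set X} {x : X}

lemma ChainDivides.impression_subset (h : ChainDivides E F) : impression E ⊆ impression F :=
  fun _ hz => mem_iInter.2 fun k =>
    let ⟨l, hl⟩ := h k
    closure_mono hl (mem_iInter.1 hz l)

lemma ChainEquiv.impression_image_eq {X Y : Type*} [MetricSpace Y] {E F : ℕ → Set X}
    (h : ChainEquiv E F) (f : X → Y) :
    impression (fun k => f '' E k) = impression (fun k => f '' F k) :=
  (h.1.image f).impression_subset.antisymm (h.2.image f).impression_subset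

lemma impression_eq_singleton_of_tendsto_smallSets (hE : Tendsto E atTop (𝓝 x).smallSets)
    (hx : ∀ k, x ∈ closure (E k)) : impression E = {x} := by
  refine Subset.antisymm (fun z hz => ?_) (singleton_subset_iff.2 (mem_iInter.2 hx))
  by_contra hzx
  obtain ⟨U, V, hU, hV, hzU, hxV, hUV⟩ := t2_separation hzx
  obtain ⟨k, hk⟩ := (tendsto_smallSets_iff.1 hE V (hV.mem_nhds hxV)).exists
  obtain ⟨w, hwU, hwE⟩ := mem_closure_iff.1 (mem_iInter.1 hz k) U hU hzU
  exact disjoint_left.1 hUV hwU (hk hwE)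

lemma tendsto_smallSets_of_impression_eq_singleton (hE : Antitone E)
    (hcpt : IsCompact (closure (E 0))) (hx : impression E = {x}) :
    Tendsto E atTop (𝓝 x).smallSets := by
  have hanti : Antitone fun k => closure (E k) := fun _ _ hkl => closure_mono (hE hkl)
  refine tendsto_smallSets_iff.2 fun U hU => ?_
  obtain ⟨k, hk⟩ := exists_subset_nhds_of_isCompact' (U := U) hanti.directed_ge
    (fun k => hcpt.of_isClosed_subset isClosed_closure (hanti k.zero_le))
    (fun _ => isClosed_closure) (fun z hz => mem_singleton_iff.1 (hx.subset hz) ▸ hU)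
  filter_upwards [eventually_ge_atTop k] with l hl
  exact subset_closure.trans ((hanti hl).trans hk)

end Impression

section Chains

variable {X : Type*} [MetricSpace X] {D : Set X} {E F : ℕ → Set X} {x : X}

namespace IsChainIn

lemma isConnected (hE : IsChainIn D E) (k : ℕ) : IsConnected (E k) :=
  (hE.1 k).2.1

lemma ssubset (hE : IsChainIn D E) (k : ℕ) : E k ⊂ D :=
  (hE.1 k).2.2.1.ssubset_of_ne (hE.1 k).2.2.2.1

lemma antitone (hE : IsChainIn D E) : Antitone E :=
  antitone_nat_of_succ_le hE.2.1

lemma tendsto_smallSets (hE : IsChainIn D E) (hD : IsCompact (closure D))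
    (hx : impression E = {x}) : Tendsto E atTop (𝓝 x).smallSets :=
  tendsto_smallSets_of_impression_eq_singleton hE.antitone
    (hD.of_isClosed_subset isClosed_closure (closure_mono (hE.ssubset 0).subset)) hx

lemma subset_of_ediam_lt (hF : IsChainIn D F) {k : ℕ} {K : Set X} (hKD : K ⊆ D)
    (hK : IsConnected K) (hKF : (K ∩ F (k + 1)).Nonempty)
    (hdiam : ediam K < mazDist D (D ∩ frontier (F (k + 1))) (D ∩ frontier (F k))) : K ⊆ F k := by
  by_contra hnot
  have hstep : F (k + 1) ⊆ F k := hF.2.1 k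
  obtain ⟨u, huK, hu⟩ := inter_frontier_nonempty_of_isPreconnected hK.isPreconnected hKF
    fun h => hnot (h.trans hstep)
  obtain ⟨v, hvK, hv⟩ := inter_frontier_nonempty_of_isPreconnected hK.isPreconnected
    (hKF.mono (inter_subset_inter_right K hstep)) hnot
  exact hdiam.not_ge
    (mazDist_le_ediam hKD hK ⟨u, huK, hKD huK, hu⟩ ⟨v, hvK, hKD hvK, hv⟩)

lemma isPrimeChain (hE : IsChainIn D E) (hlim : Tendsto (fun k => ediam (E k)) atTop (𝓝 0)) :
    IsPrimeChain D E := by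
  refine ⟨hE, fun F hF hFE k => ?_⟩
  obtain ⟨l, hl⟩ := (hlim.eventually_lt_const (hF.2.2.1 k)).exists
  obtain ⟨m, hm⟩ := hFE l
  obtain ⟨z, hz⟩ := (hF.isConnected (max m (k + 1))).nonempty
  have hmeet : (E l ∩ F (k + 1)).Nonempty :=
    ⟨z, hm (hF.antitone (le_max_left _ _) hz), hF.antitone (le_max_right _ _) hz⟩
  exact ⟨l, hF.subset_of_ediam_lt (hE.ssubset l).subset (hE.isConnected l) hmeet hl⟩

lemma chainDivides_of_mazDist_eq_zero (hE : IsChainIn D E) (hF : IsChainIn D F)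
    (hEdiam : Tendsto (fun k => ediam (E k)) atTop (𝓝 0))
    (hFdiam : Tendsto (fun k => ediam (F k)) atTop (𝓝 0))
    (h : ∀ l m, mazDist D (E l) (F m) = 0) : ChainDivides E F := by
  intro k
  set c := mazDist D (D ∩ frontier (F (k + 1))) (D ∩ frontier (F k))
  have hc : 0 < c / 3 := ENNReal.div_pos (hF.2.2.1 k).ne' ENNReal.ofNat_ne_top
  obtain ⟨l, hl⟩ := (hEdiam.eventually_lt_const hc).exists
  obtain ⟨m, hm, hkm⟩ :=
    ((hFdiam.eventually_lt_const hc).and (eventually_ge_atTop (k + 1))).exists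
  obtain ⟨K, hKD, hK, hKE, hKF, hKdiam⟩ := mazDist_lt_iff.1 ((h l m).trans_lt hc)
  have hEK : (E l ∩ K).Nonempty := inter_comm K _ ▸ hKE
  have hEKF : ((E l ∪ K) ∩ F m).Nonempty := hKF.mono (inter_subset_inter_left _ subset_union_right)
  have hdiam : ediam (E l ∪ K ∪ F m) < c :=
    calc ediam (E l ∪ K ∪ F m) ≤ ediam (E l) + ediam K + ediam (F m) :=
          (ediam_union_le hEKF).trans (by gcongr; exact ediam_union_le hEK)
      _ < c / 3 + c / 3 + c / 3 := by gcongr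
      _ = c := ENNReal.add_thirds c
  obtain ⟨z, hz⟩ := (hF.isConnected m).nonempty
  refine ⟨l, Subset.trans (fun w hw => .inl (.inl hw)) (hF.subset_of_ediam_lt
    (union_subset (union_subset (hE.ssubset l).subset hKD) (hF.ssubset m).subset)
    (((hE.isConnected l).union hEK hK).union hEKF (hF.isConnected m))
    ⟨z, .inr hz, hF.antitone hkm hz⟩ hdiam)⟩

end IsChainIn

lemma IsSingletonPrimeChain.tendsto_ediam (hE : IsSingletonPrimeChain D E)
    (hD : IsCompact (closure D)) : Tendsto (fun k => ediam (E k)) atTop (𝓝 0) :=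
  let ⟨⟨hchain, _⟩, x, hx⟩ := hE
  (tendsto_ediam_smallSets_nhds x).comp (hchain.tendsto_smallSets hD hx)

end Chains

section Existence

variable {X : Type*} [MetricSpace X] {D : Set X} {x : X}

/-- Connected sets `E k ⊆ D` shrinking to the point `x`, all belonging to the filter `l`, such that
the boundary of `E k` in `D` lies at least twice as far from `x` as `E (k + 1)` reaches. Such
sequences are the candidates for chains representing the end along which `l` converges to `x`. -/
structure IsSeparatedSequence (D : Set X) (x : X) (l : Filter X) (E : ℕ → Set X) (R : ℕ → ℝ) :
    Prop where
  subset : ∀ k, E k ⊆ D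
  isConnected : ∀ k, IsConnected (E k)
  mem : ∀ k, E k ∈ l
  subset_ball : ∀ k, E k ⊆ ball x (R k)
  le_dist : ∀ k, ∀ z ∈ D ∩ frontier (E k), 2 * R (k + 1) ≤ dist z x
  tendsto : Tendsto R atTop (𝓝 0)

namespace IsSeparatedSequence

variable {l : Filter X} {E : ℕ → Set X} {R : ℕ → ℝ}

lemma radius_pos (h : IsSeparatedSequence D x l E R) (k : ℕ) : 0 < R k :=
  nonempty_ball.1 ((h.isConnected k).nonempty.mono (h.subset_ball k))

lemma succ_subset [l.NeBot] (h : IsSeparatedSequence D x l E R) (k : ℕ) : E (k + 1) ⊆ E k := by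
  by_contra hnot
  have hmeet : (E (k + 1) ∩ E k).Nonempty := nonempty_of_mem (inter_mem (h.mem _) (h.mem _))
  obtain ⟨z, hz, hzfr⟩ := inter_frontier_nonempty_of_isPreconnected
    (h.isConnected (k + 1)).isPreconnected hmeet hnot
  have hnear : dist z x < R (k + 1) := h.subset_ball _ hz
  linarith [h.le_dist k z ⟨h.subset _ hz, hzfr⟩, h.radius_pos (k + 1)]

lemma mazDist_pos (h : IsSeparatedSequence D x l E R) (k : ℕ) :
    0 < mazDist D (D ∩ frontier (E (k + 1))) (D ∩ frontier (E k)) := by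
  refine (ENNReal.ofReal_pos.2 (h.radius_pos (k + 1))).trans_le
    (ofReal_le_mazDist fun u hu v hv => ?_)
  have hux : dist u x ≤ R (k + 1) :=
    ((closure_mono (h.subset_ball _)).trans closure_ball_subset_closedBall) hu.2.1
  linarith [h.le_dist k v hv, dist_triangle_left v x u]

lemma tendsto_smallSets (h : IsSeparatedSequence D x l E R) :
    Tendsto E atTop (𝓝 x).smallSets := by
  refine tendsto_smallSets_iff.2 fun U hU => ?_
  obtain ⟨ε, hε, hεU⟩ := Metric.mem_nhds_iff.1 hU
  filter_upwards [h.tendsto.eventually_lt_const hε] with k hk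
  exact (h.subset_ball k).trans ((ball_subset_ball hk.le).trans hεU)

lemma mem_closure [l.NeBot] (h : IsSeparatedSequence D x l E R) (hl : l ≤ 𝓝 x) (k : ℕ) :
    x ∈ closure (E k) :=
  mem_closure_iff_clusterPt.2 ((ClusterPt.of_le_nhds hl).mono (le_principal_iff.2 (h.mem k)))

lemma impression_eq [l.NeBot] (h : IsSeparatedSequence D x l E R) (hl : l ≤ 𝓝 x) :
    impression E = {x} :=
  impression_eq_singleton_of_tendsto_smallSets h.tendsto_smallSets (h.mem_closure hl)

lemma isChainIn [l.NeBot] (h : IsSeparatedSequence D x l E R) (hl : l ≤ 𝓝 x)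
    (hx : x ∈ frontier D) (hE : E 0 ≠ D) : IsChainIn D E := by
  have hanti : Antitone E := antitone_nat_of_succ_le h.succ_subset
  refine ⟨fun k => ⟨isBounded_ball.subset (h.subset_ball k), h.isConnected k, h.subset k, ?_,
    x, h.mem_closure hl k, hx⟩, h.succ_subset, h.mazDist_pos, ?_⟩
  · rintro rfl
    exact hE ((h.subset 0).antisymm (hanti k.zero_le))
  · exact (h.impression_eq hl).trans_subset (singleton_subset_iff.2 hx)

lemma isSingletonPrimeChain [l.NeBot] (h : IsSeparatedSequence D x l E R) (hl : l ≤ 𝓝 x)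
    (hx : x ∈ frontier D) (hE : E 0 ≠ D) : IsSingletonPrimeChain D E :=
  ⟨(h.isChainIn hl hx hE).isPrimeChain
    ((tendsto_ediam_smallSets_nhds x).comp h.tendsto_smallSets), x, h.impression_eq hl⟩

end IsSeparatedSequence

lemma FinitelyConnectedAt.exists_isConnected_mem_ultrafilter [LocallyConnectedSpace X]
    (hDx : FinitelyConnectedAt D x) (hD : IsOpen D) {l : Ultrafilter X}
    (hl : (l : Filter X) ≤ 𝓝 x) (hDl : D ∈ l) {r : ℝ} (hr : 0 < r) :
    ∃ C ⊆ D, IsConnected C ∧ C ∈ l ∧ C ⊆ ball x r ∧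
      ∃ ρ > 0, ∀ z ∈ D ∩ frontier C, ρ ≤ dist z x := by
  obtain ⟨U, hU, -, hxU, hUr, hfin⟩ := hDx r hr
  have hcover : ⋃₀ {C | ∃ y ∈ U ∩ D, C = connectedComponentIn (U ∩ D) y} ∈ l :=
    mem_of_superset (inter_mem (hl (hU.mem_nhds hxU)) hDl) fun y hy =>
      ⟨_, ⟨y, hy, rfl⟩, mem_connectedComponentIn hy⟩
  obtain ⟨_, ⟨y, hy, rfl⟩, hCl⟩ := (Ultrafilter.finite_sUnion_mem_iff hfin).1 hcover
  have hCU : connectedComponentIn (U ∩ D) y ⊆ U ∩ D := connectedComponentIn_subset _ _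
  obtain ⟨ρ, hρ, hρU⟩ := Metric.isOpen_iff.1 hU x hxU
  refine ⟨_, hCU.trans inter_subset_right, isConnected_connectedComponentIn_iff.2 hy, hCl,
    (hCU.trans inter_subset_left).trans hUr, ρ, hρ, fun z hz => ?_⟩
  by_contra! hlt
  exact (disjoint_frontier_connectedComponentIn (hU.inter hD) y).notMem_of_mem_left hz.2
    ⟨hρU hlt, hz.1⟩

lemma FinitelyConnectedAt.exists_isSeparatedSequence [LocallyConnectedSpace X]
    (hDx : FinitelyConnectedAt D x) (hD : IsOpen D) {l : Ultrafilter X}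
    (hl : (l : Filter X) ≤ 𝓝 x) (hDl : D ∈ l) {r : ℝ} (hr : 0 < r) :
    ∃ E R, R 0 = r ∧ IsSeparatedSequence D x l E R := by
  choose! C hCD hCconn hCl hCball ρ hρ hCfr using
    fun s (hs : 0 < s) => hDx.exists_isConnected_mem_ultrafilter hD hl hDl hs
  let next : ℝ → ℝ := fun s => min (s / 2) (ρ s / 2)
  let R : ℕ → ℝ := fun k => next^[k] r
  have hsucc : ∀ k, R (k + 1) = next (R k) := fun k => Function.iterate_succ_apply' _ _ _
  have hpos : ∀ k, 0 < R k := fun k => by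
    induction k with
    | zero => exact hr
    | succ k ih => rw [hsucc]; exact lt_min (half_pos ih) (half_pos (hρ _ ih))
  have hhalf : ∀ k, R (k + 1) ≤ R k * (1 / 2) := fun k => by
    rw [hsucc, mul_one_div]; exact min_le_left _ _
  have hρle : ∀ k, 2 * R (k + 1) ≤ ρ (R k) := fun k => by
    rw [hsucc]; linarith [min_le_right (R k / 2) (ρ (R k) / 2)]
  have hgeom : ∀ k, R k ≤ r * (1 / 2) ^ k := fun k => by
    induction k with
    | zero => rw [pow_zero, mul_one]; exact le_rfl
    | succ k ih => rw [pow_succ, ← mul_assoc]; exact (hhalf k).trans (by gcongr)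
  have hgeom_lim : Tendsto (fun k : ℕ => r * (1 / 2) ^ k) atTop (𝓝 0) := by
    simpa only [mul_zero] using
      (tendsto_pow_atTop_nhds_zero_of_lt_one one_half_pos.le one_half_lt_one).const_mul r
  exact ⟨fun k => C (R k), R, rfl,
    { subset := fun k => hCD _ (hpos k)
      isConnected := fun k => hCconn _ (hpos k)
      mem := fun k => hCl _ (hpos k)
      subset_ball := fun k => hCball _ (hpos k)
      le_dist := fun k z hz => (hρle k).trans (hCfr _ (hpos k) z hz)
      tendsto := squeeze_zero (fun k => (hpos k).le) hgeom hgeom_lim }⟩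

end Existence

section Homeomorphism

variable {X Y : Type*} [MetricSpace X] [MetricSpace Y] {D : Set X} {Ω : Set Y} {f : X → Y}
  {g : Y → X}

namespace IsHomeoBetween

lemma symm (h : IsHomeoBetween f g D Ω) : IsHomeoBetween g f Ω D :=
  let ⟨hf, hg, hfm, hgm, hgf, hfg⟩ := h
  ⟨hg, hf, hgm, hfm, hfg, hgf⟩

lemma image_image_inv (h : IsHomeoBetween f g D Ω) {S : Set Y} (hS : S ⊆ Ω) :
    f '' (g '' S) = S :=
  LeftInvOn.image_image' h.2.2.2.2.2 hS

lemma image_ssubset (h : IsHomeoBetween f g D Ω) {S : Set X} (hS : S ⊂ D) : f '' S ⊂ Ω := by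
  refine ((image_mono hS.subset).trans h.2.2.1.image_subset).ssubset_of_ne fun heq => hS.ne ?_
  refine hS.subset.antisymm ?_
  rw [← h.symm.image_image_inv hS.subset, heq]
  exact fun z hz => ⟨f z, h.2.2.1 hz, h.2.2.2.2.1 z hz⟩

lemma impression_image_subset_frontier (h : IsHomeoBetween f g D Ω) (hD : IsOpen D)
    (hΩ : IsOpen Ω) {E : ℕ → Set X} (hE : IsChainIn D E) :
    impression (fun k => f '' E k) ⊆ frontier Ω := by
  obtain ⟨-, hg, hfm, hgm, hgf, -⟩ := h
  intro y hy
  have hED : ∀ k, E k ⊆ D := fun k => (hE.ssubset k).subset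
  have hfE : ∀ k, f '' E k ⊆ Ω := fun k => (image_mono (hED k)).trans hfm.image_subset
  have hyE : ∀ k, y ∈ closure (f '' E k) := mem_iInter.1 hy
  rw [hΩ.frontier_eq]
  refine ⟨closure_mono (hfE 0) (hyE 0), fun hyΩ => ?_⟩
  have hgy : g y ∈ impression E := mem_iInter.2 fun k =>
    ((hg y hyΩ).mono (hfE k)).mem_closure (hyE k)
      (mapsTo_image_iff.2 fun z hz => by rwa [Function.comp_apply, hgf z (hED k hz)])
  exact (hD.frontier_eq ▸ hE.2.2.2 hgy).2 (hgm hyΩ)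

lemma impression_image_nonempty (h : IsHomeoBetween f g D Ω) (hΩc : IsCompact (closure Ω))
    {E : ℕ → Set X} (hE : IsChainIn D E) : (impression fun k => f '' E k).Nonempty :=
  IsCompact.nonempty_iInter_of_sequence_nonempty_isCompact_isClosed _
    (fun k => closure_mono (image_mono (hE.2.1 k)))
    (fun k => ((hE.isConnected k).nonempty.image f).closure)
    (hΩc.of_isClosed_subset isClosed_closure (closure_mono (h.image_ssubset (hE.ssubset 0)).subset))
    fun _ => isClosed_closure

lemma exists_tendsto_mem_frontier (h : IsHomeoBetween f g D Ω) (hD : IsOpen D)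
    (hDc : IsCompact (closure D)) (hΩ : IsOpen Ω) {y : Y} (hy : y ∈ frontier Ω)
    {l : Ultrafilter Y} (hl : (l : Filter Y) ≤ 𝓝 y) (hΩl : Ω ∈ l) :
    ∃ x ∈ frontier D, Tendsto g l (𝓝 x) := by
  obtain ⟨hf, -, hfm, hgm, -, hfg⟩ := h
  have hgl : D ∈ l.map g := Ultrafilter.mem_map.2 (mem_of_superset hΩl hgm)
  obtain ⟨x, hxD, hx⟩ := hDc.ultrafilter_le_nhds (l.map g)
    (le_principal_iff.2 (mem_of_superset hgl subset_closure))
  refine ⟨x, ?_, hx⟩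
  rw [hD.frontier_eq]
  refine ⟨hxD, fun hxD' => ?_⟩
  have hfgl : Tendsto (f ∘ g) l (𝓝 (f x)) := (hf.continuousAt (hD.mem_nhds hxD')).tendsto.comp hx
  have hfgl' : Tendsto (f ∘ g) l (𝓝 y) :=
    (tendsto_id.mono_left hl).congr' (mem_of_superset hΩl fun z hz => (hfg z hz).symm)
  rw [hΩ.frontier_eq, tendsto_nhds_unique hfgl' hfgl] at hy
  exact hy.2 (hfm hxD')

lemma exists_isSingletonPrimeChain (h : IsHomeoBetween f g D Ω) [LocallyConnectedSpace X]
    (hD : IsOpen D) (hDc : IsCompact (closure D)) (hDfc : FinitelyConnectedAtBoundary D)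
    (hΩ : IsOpen Ω) {y : Y} (hy : y ∈ frontier Ω) :
    ∃ E, IsSingletonPrimeChain D E ∧ y ∈ impression fun k => f '' E k := by
  obtain ⟨l, hΩl, hl⟩ := mem_closure_iff_ultrafilter.1 (frontier_subset_closure hy)
  obtain ⟨x, hx, hgx⟩ := h.exists_tendsto_mem_frontier hD hDc hΩ hy hl hΩl
  have hDl : D ∈ l.map g := Ultrafilter.mem_map.2 (mem_of_superset hΩl h.2.2.2.1)
  obtain ⟨d, hd⟩ := l.map g |>.nonempty_of_mem hDl
  have hdx : 0 < dist d x := dist_pos.2 fun hdx => (hD.frontier_eq ▸ hx).2 (hdx ▸ hd)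
  obtain ⟨E, R, hR0, hE⟩ := (hDfc x hx).exists_isSeparatedSequence (l := l.map g) hD hgx hDl hdx
  have hdE : d ∉ E 0 := fun hdE => (mem_ball.1 (hE.subset_ball 0 hdE)).ne hR0.symm
  refine ⟨E, hE.isSingletonPrimeChain hgx hx (ne_of_mem_of_not_mem' hd hdE).symm, ?_⟩
  refine mem_iInter.2 fun k => mem_closure_iff_ultrafilter.2 ⟨l, ?_, hl⟩
  filter_upwards [hΩl, hE.mem k] with z hz hgz
  exact ⟨g z, hgz, h.2.2.2.2.2 z hz⟩

end IsHomeoBetween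

end Homeomorphism

section LocallyConnectedBoundary

variable {Y : Type*} [MetricSpace Y] {Ω : Set Y} {y : Y}

lemma LocallyConnectedAt.exists_isConnected_mem_nhdsWithin (h : LocallyConnectedAt Ω y) {r : ℝ}
    (hr : 0 < r) : ∃ A ∈ 𝓝[Ω] y, IsConnected A ∧ A ⊆ Ω ∧ A ⊆ ball y r := by
  obtain ⟨U, hU, -, hyU, hUr, hUΩ⟩ := h r hr
  exact ⟨U ∩ Ω, inter_mem (mem_nhdsWithin_of_mem_nhds (hU.mem_nhds hyU)) self_mem_nhdsWithin, hUΩ,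
    inter_subset_right, inter_subset_left.trans hUr⟩

lemma LocallyConnectedAt.mazDist_eq_zero (h : LocallyConnectedAt Ω y) {A B : Set Y} (hA : A ⊆ Ω)
    (hB : B ⊆ Ω) (hyA : y ∈ closure A) (hyB : y ∈ closure B) : mazDist Ω A B = 0 := by
  refine nonpos_iff_eq_zero.1 (le_of_forall_gt fun c hc => ?_)
  have hsmall := eventually_smallSets.1 ((tendsto_ediam_smallSets_nhds y).eventually_lt_const hc)
  obtain ⟨V, hV, hVc⟩ := hsmall
  obtain ⟨r, hr, hrV⟩ := Metric.mem_nhds_iff.1 hV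
  obtain ⟨K, hKy, hK, hKΩ, hKr⟩ := h.exists_isConnected_mem_nhdsWithin hr
  exact (mazDist_le_ediam hKΩ hK (inter_nonempty_of_mem_nhdsWithin hKy hA hyA)
    (inter_nonempty_of_mem_nhdsWithin hKy hB hyB)).trans_lt (hVc K (hKr.trans hrV))

end LocallyConnectedBoundary

section ClassF

variable {X Y : Type*} [MetricSpace X] [MetricSpace Y] {D : Set X} {Ω : Set Y} {f : X → Y}
  {g : Y → X}

namespace ClassF

lemma symm (hf : ClassF D Ω f g) : ClassF Ω D g f := by
  refine ⟨hf.1.symm, fun A B hA hA' hAc hB hB' hBc => ?_⟩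
  have hgA := hf.1.symm.image_ssubset (hA.ssubset_of_ne hA')
  have hgB := hf.1.symm.image_ssubset (hB.ssubset_of_ne hB')
  have hg : ContinuousOn g Ω := hf.1.2.1
  have hiff := hf.2 _ _ hgA.subset hgA.ne (hAc.image g (hg.mono hA)) hgB.subset hgB.ne
    (hBc.image g (hg.mono hB))
  rw [hf.1.image_image_inv hA, hf.1.image_image_inv hB] at hiff
  exact hiff.symm

lemma mazDist_image_eq_zero_iff (hf : ClassF D Ω f g) (hX : LocallyRectifiablyConnected X)
    (hY : LocallyRectifiablyConnected Y) (hD : IsOpen D) (hΩ : IsOpen Ω) {A B : Set X}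
    (hA : A ⊂ D) (hAc : IsConnected A) (hB : B ⊂ D) (hBc : IsConnected B) :
    mazDist Ω (f '' A) (f '' B) = 0 ↔ mazDist D A B = 0 := by
  rw [← innerDiamDist_eq_mazDist hX hD, ← innerDiamDist_eq_mazDist hY hΩ]
  exact (hf.2 A B hA.subset hA.ne hAc hB.subset hB.ne hBc).symm

lemma impression_image_subsingleton (hf : ClassF D Ω f g) (hX : LocallyRectifiablyConnected X)
    (hY : LocallyRectifiablyConnected Y) (hD : IsOpen D) (hΩ : IsOpen Ω)
    (hΩlc : LocallyConnectedAtBoundary Ω) {E : ℕ → Set X} (hE : IsChainIn D E)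
    (hlim : Tendsto (fun k => ediam (E k)) atTop (𝓝 0)) :
    (impression fun k => f '' E k).Subsingleton := by
  intro a ha b hb
  by_contra hab
  have hr : 0 < dist a b / 3 := div_pos (dist_pos.2 hab) three_pos
  have hfr := hf.1.impression_image_subset_frontier hD hΩ hE
  obtain ⟨A, hAa, hAc, hAΩ, hAr⟩ := (hΩlc a (hfr ha)).exists_isConnected_mem_nhdsWithin hr
  obtain ⟨B, hBb, hBc, hBΩ, hBr⟩ := (hΩlc b (hfr hb)).exists_isConnected_mem_nhdsWithin hr
  have hsep : ∀ u ∈ A, ∀ v ∈ B, dist a b / 3 ≤ dist u v := fun u hu v hv => by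
    have hua : dist u a < dist a b / 3 := hAr hu
    have hvb : dist v b < dist a b / 3 := hBr hv
    linarith [dist_triangle4 a u v b, dist_comm u a]
  have hpos : 0 < mazDist Ω A B := (ENNReal.ofReal_pos.2 hr).trans_le (ofReal_le_mazDist hsep)
  have hdisj : Disjoint A B := Set.disjoint_left.2 fun z hzA hzB =>
    (hr.trans_le (hsep z hzA z hzB)).ne' (dist_self z)
  have hne : A ≠ Ω ∧ B ≠ Ω := by
    constructor <;> rintro rfl
    · exact hBc.nonempty.ne_empty (hdisj.eq_bot_of_ge hBΩ)
    · exact hAc.nonempty.ne_empty (hdisj.eq_bot_of_le hAΩ)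
  have hmeet : ∀ c ∈ impression (fun k => f '' E k), ∀ C ∈ 𝓝[Ω] c, ∀ k,
      (E k ∩ g '' C).Nonempty := by
    intro c hc C hC k
    obtain ⟨_, hzC, z, hz, rfl⟩ := inter_nonempty_of_mem_nhdsWithin hC
      (hf.1.image_ssubset (hE.ssubset k)).subset (mem_iInter.1 hc k)
    exact ⟨z, hz, f z, hzC, hf.1.2.2.2.2.1 z ((hE.ssubset k).subset hz)⟩
  have hzero : mazDist D (g '' A) (g '' B) = 0 :=
    mazDist_eq_zero_of_tendsto (fun k => (hE.ssubset k).subset) hE.isConnected (hmeet a ha A hAa)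
      (hmeet b hb B hBb) hlim
  exact hpos.ne' ((hf.symm.mazDist_image_eq_zero_iff hY hX hΩ hD (hAΩ.ssubset_of_ne hne.1) hAc
    (hBΩ.ssubset_of_ne hne.2) hBc).1 hzero)

lemma exists_impression_image_eq_singleton (hf : ClassF D Ω f g)
    (hX : LocallyRectifiablyConnected X) (hY : LocallyRectifiablyConnected Y) (hD : IsOpen D)
    (hDc : IsCompact (closure D)) (hΩ : IsOpen Ω) (hΩc : IsCompact (closure Ω))
    (hΩlc : LocallyConnectedAtBoundary Ω) {E : ℕ → Set X} (hE : IsSingletonPrimeChain D E) :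
    ∃ y ∈ frontier Ω, impression (fun k => f '' E k) = {y} := by
  obtain ⟨y, hy⟩ := hf.1.impression_image_nonempty hΩc hE.1.1
  exact ⟨y, hf.1.impression_image_subset_frontier hD hΩ hE.1.1 hy,
    (hf.impression_image_subsingleton hX hY hD hΩ hΩlc hE.1.1
      (hE.tendsto_ediam hDc)).eq_singleton_of_mem hy⟩

lemma chainDivides_of_mem_impression_image (hf : ClassF D Ω f g)
    (hX : LocallyRectifiablyConnected X) (hY : LocallyRectifiablyConnected Y) (hD : IsOpen D)
    (hDc : IsCompact (closure D)) (hΩ : IsOpen Ω) {y : Y} (hΩy : LocallyConnectedAt Ω y)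
    {E F : ℕ → Set X} (hE : IsSingletonPrimeChain D E) (hF : IsSingletonPrimeChain D F)
    (hyE : y ∈ impression fun k => f '' E k) (hyF : y ∈ impression fun k => f '' F k) :
    ChainDivides E F := by
  refine hE.1.1.chainDivides_of_mazDist_eq_zero hF.1.1 (hE.tendsto_ediam hDc)
    (hF.tendsto_ediam hDc) fun l m => ?_
  rw [← hf.mazDist_image_eq_zero_iff hX hY hD hΩ (hE.1.1.ssubset l) (hE.1.1.isConnected l)
    (hF.1.1.ssubset m) (hF.1.1.isConnected m)]
  exact hΩy.mazDist_eq_zero (hf.1.image_ssubset (hE.1.1.ssubset l)).subset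
    (hf.1.image_ssubset (hF.1.1.ssubset m)).subset (mem_iInter.1 hyE l) (mem_iInter.1 hyF m)

lemma chainEquiv_iff_impression_image_eq (hf : ClassF D Ω f g)
    (hX : LocallyRectifiablyConnected X) (hY : LocallyRectifiablyConnected Y) (hD : IsOpen D)
    (hDc : IsCompact (closure D)) (hΩ : IsOpen Ω) (hΩc : IsCompact (closure Ω))
    (hΩlc : LocallyConnectedAtBoundary Ω) {E F : ℕ → Set X} (hE : IsSingletonPrimeChain D E)
    (hF : IsSingletonPrimeChain D F) :
    ChainEquiv E F ↔ impression (fun k => f '' E k) = impression (fun k => f '' F k) := by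
  refine ⟨fun h => h.impression_image_eq f, fun heq => ?_⟩
  obtain ⟨y, hyE⟩ := hf.1.impression_image_nonempty hΩc hE.1.1
  have hyF : y ∈ impression fun k => f '' F k := heq ▸ hyE
  have hΩy := hΩlc y (hf.1.impression_image_subset_frontier hD hΩ hE.1.1 hyE)
  exact ⟨hf.chainDivides_of_mem_impression_image hX hY hD hDc hΩ hΩy hE hF hyE hyF,
    hf.chainDivides_of_mem_impression_image hX hY hD hDc hΩ hΩy hF hE hyF hyE⟩

end ClassF

end ClassF

theorem statement_5_general {X Y : Type*} [MetricSpace X] [MetricSpace Y] [Nonempty Y]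
    (hX : LocallyRectifiablyConnected X) (hY : LocallyRectifiablyConnected Y)
    {D : Set X} (hD : IsOpen D) (hDc : IsCompact (closure D)) (hDfc : FinitelyConnectedAtBoundary D)
    {Ω : Set Y} (hΩ : IsOpen Ω) (hΩc : IsCompact (closure Ω)) (hΩlc : LocallyConnectedAtBoundary Ω)
    {f : X → Y} {g : Y → X} (hf : ClassF D Ω f g) :
    ∃ Φ : (ℕ → Set X) → Y,
      (∀ E : ℕ → Set X, IsSingletonPrimeChain D E →
        Φ E ∈ frontier Ω ∧ impression (fun k => f '' E k) = {Φ E}) ∧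
      (∀ E F : ℕ → Set X, IsSingletonPrimeChain D E → IsSingletonPrimeChain D F →
        (ChainEquiv E F ↔ Φ E = Φ F)) ∧
      (∀ y ∈ frontier Ω, ∃ E : ℕ → Set X, IsSingletonPrimeChain D E ∧ Φ E = y) := by
  have := hX.locallyConnectedSpace
  choose! Φ hΦfr hΦ using fun E (hE : IsSingletonPrimeChain D E) =>
    hf.exists_impression_image_eq_singleton hX hY hD hDc hΩ hΩc hΩlc hE
  refine ⟨Φ, fun E hE => ⟨hΦfr E hE, hΦ E hE⟩, fun E F hE hF => ?_, fun y hy => ?_⟩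
  · rw [hf.chainEquiv_iff_impression_image_eq hX hY hD hDc hΩ hΩc hΩlc hE hF, hΦ E hE, hΦ F hF,
      singleton_eq_singleton_iff]
  · obtain ⟨E, hE, hyE⟩ := hf.1.exists_isSingletonPrimeChain hD hDc hDfc hΩ hy
    rw [hΦ E hE] at hyE
    exact ⟨E, hE, hyE.symm⟩

/-- for `f ∈ F(D, Ω)` with `D` finitely connected at the boundary and `Ω`
locally connected at the boundary, the map `Φ : ∂_P^S D → ∂Ω`, `Φ([E_k]) := x` where
`{x} = I[f⁻¹(E_k)]`, is well defined and bijective.  (Here `[E_k] ↦ Φ([E_k])` is encoded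
at the level of representative chains: `Φ` is constant on equivalence classes, equivalence
is detected by `Φ`, and `Φ` is onto `∂Ω`.) -/
theorem statement_5 {X Y : Type*} [MetricSpace X] [MetricSpace Y]
    (hX : AssumptionsA X) (hY : AssumptionsA Y)
    (D : Set X) (hDdom : IsDomainIn D) (hDbdd : Bornology.IsBounded D)
    (hDne : D ≠ Set.univ) (hDfc : FinitelyConnectedAtBoundary D)
    (Ω : Set Y) (hΩdom : IsDomainIn Ω) (hΩbdd : Bornology.IsBounded Ω)
    (hΩne : Ω ≠ Set.univ) (hΩlc : LocallyConnectedAtBoundary Ω)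
    (f : X → Y) (g : Y → X) (hf : ClassF D Ω f g) :
    ∃ Φ : (ℕ → Set X) → Y,
      (∀ E : ℕ → Set X, IsSingletonPrimeChain D E →
        Φ E ∈ frontier Ω ∧ impression (fun k => f '' E k) = {Φ E}) ∧
      (∀ E F : ℕ → Set X, IsSingletonPrimeChain D E → IsSingletonPrimeChain D F →
        (ChainEquiv E F ↔ Φ E = Φ F)) ∧
      (∀ y ∈ frontier Ω, ∃ E : ℕ → Set X, IsSingletonPrimeChain D E ∧ Φ E = y) := by
  have := hΩdom.2.nonempty.to_type
  exact statement_5_general hX.2.2.locallyRectifiablyConnected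
    hY.2.2.locallyRectifiablyConnected hDdom.1 (hX.isCompact_closure hDbdd) hDfc hΩdom.1
    (hY.isCompact_closure hΩbdd) hΩlc hf

end
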